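/- arXiv:2102.13358 — 2 statements merged into one kernel-verified Lean document; each statement's English description precedes it below -/
import Mathlib

section
/- Let R be a real symmetric 3×3 matrix, r = tr(R), S = R − (r/3)·I its traceless part, s = tr(S²) and t = tr(S³). Assume 6t² = s³ and s ≠ 0. Then R has exactly two distinct eigenvalues: the simple eigenvalue α = r/3 + 2t/s, whose eigenspace is one-dimensional, and the double eigenvalue β = r/3 − t/s, whose eigenspace is two-dimensional. -/
open Matrix Module

/-!
Put `u = t / s`. The condition `6 t² = s³` says that `s = 6 u²` and `t = 6 u³`, so Cayley–Hamilton,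
written in terms of power traces, reads `(S - 2u) (S + u)² = 0` for the traceless part `S` of `R`.
A symmetric matrix is semisimple, hence already a root of the squarefree polynomial
`(X - α) (X - β)`. The trace `α + 2 β` then determines the dimensions of the two eigenspaces.
-/

theorem isSemisimple_toLin'_of_isHermitian {𝕜 n : Type*} [RCLike 𝕜] [Fintype n] [DecidableEq n]
    {A : Matrix n n 𝕜} (hA : A.IsHermitian) : End.IsSemisimple A.toLin' := by
  have hE : End.IsSemisimple (toEuclideanLin A) :=
    End.isFinitelySemisimple_iff_isSemisimple.1
      (isSymmetric_toEuclideanLin_iff.2 hA).isFinitelySemisimple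
  exact (LinearEquiv.isSemisimple_iff _ _ (WithLp.linearEquiv 2 𝕜 (n → 𝕜)) rfl).1 hE

theorem eq_six_mul_div_pow {K : Type*} [Field K] {s t : K} (h : 6 * t ^ 2 = s ^ 3) (hs : s ≠ 0) :
    s = 6 * (t / s) ^ 2 ∧ t = 6 * (t / s) ^ 3 := by
  constructor
  · field_simp
    linear_combination -h
  · field_simp
    linear_combination -t * h

section CayleyHamilton

variable {A : Type*} [CommRing A]

theorem six_smul_matrix_pow_three (M : Matrix (Fin 3) (Fin 3) A) :
    (6 : A) • M ^ 3 = (6 * M.trace) • M ^ 2 + (3 * ((M ^ 2).trace - M.trace ^ 2)) • M +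
      (M.trace ^ 3 - 3 * M.trace * (M ^ 2).trace + 2 * (M ^ 3).trace) • 1 := by
  ext i j
  fin_cases i <;> fin_cases j <;>
    simp [pow_succ, Matrix.mul_apply, Fin.sum_univ_three, Matrix.trace_fin_three] <;> ring

theorem six_smul_pow_three_of_finrank_eq_three {V : Type*} [Nontrivial A] [AddCommGroup V]
    [Module A V] [Module.Free A V] [Module.Finite A V] (hV : finrank A V = 3) (f : End A V) :
    (6 : A) • f ^ 3 = (6 * LinearMap.trace A V f) • f ^ 2 +
      (3 * (LinearMap.trace A V (f ^ 2) - LinearMap.trace A V f ^ 2)) • f +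
      (LinearMap.trace A V f ^ 3 - 3 * LinearMap.trace A V f * LinearMap.trace A V (f ^ 2) +
        2 * LinearMap.trace A V (f ^ 3)) • 1 := by
  let b := finBasisOfFinrankEq A V hV
  apply (LinearMap.toMatrixAlgEquiv b).injective
  have htrace (g : End A V) : LinearMap.trace A V g = (LinearMap.toMatrixAlgEquiv b g).trace :=
    LinearMap.trace_eq_matrix_trace A b g
  simpa only [htrace, map_add, map_smul, map_pow, map_one] using
    six_smul_matrix_pow_three (LinearMap.toMatrixAlgEquiv b f)

end CayleyHamilton

section Endomorphisms

open Polynomial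

variable {K V : Type*} [Field K] [AddCommGroup V] [Module K V] {f : End K V} {a b : K}

theorem isRoot_of_hasEigenvalue_of_aeval_eq_zero {p : K[X]} (hp : aeval f p = 0)
    (ha : f.HasEigenvalue a) : p.IsRoot a :=
  (End.isRoot_of_hasEigenvalue ha).dvd (minpoly.dvd K f hp)

theorem hasEigenvalue_of_finrank_eigenspace_ne_zero (h : finrank K (f.eigenspace a) ≠ 0) :
    f.HasEigenvalue a :=
  End.hasEigenvalue_iff.2 fun hbot => h (by rw [hbot, finrank_bot])

variable [FiniteDimensional K V]

theorem aeval_mul_sq_eq_zero_of_trace_pow_eq [CharZero K] {u : K} (hV : finrank K V = 3)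
    (h₁ : LinearMap.trace K V f = 0) (h₂ : LinearMap.trace K V (f ^ 2) = 6 * u ^ 2)
    (h₃ : LinearMap.trace K V (f ^ 3) = 6 * u ^ 3) :
    aeval f ((X - C (2 * u)) * (X + C u) ^ 2) = 0 := by
  have hcubic : (6 : K) • f ^ 3 = (18 * u ^ 2) • f + (12 * u ^ 3) • 1 := by
    rw [six_smul_pow_three_of_finrank_eq_three hV, h₁, h₂, h₃]
    module
  have hfactor : (X - C (2 * u)) * (X + C u) ^ 2 =
      X ^ 3 - (3 * u ^ 2) • X - (2 * u ^ 3) • (1 : K[X]) := by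
    simp only [smul_eq_C_mul, map_mul, map_pow, map_ofNat]
    ring
  simp only [hfactor, map_sub, map_smul, map_pow, aeval_X, map_one]
  linear_combination (norm := module) (6 : K)⁻¹ • hcubic

theorem aeval_eq_zero_of_dvd_pow {p q : K[X]} {n : ℕ} (hf : f.IsSemisimple)
    (hp : aeval f p = 0) (hpq : p ∣ q ^ n) : aeval f q = 0 := by
  refine End.eq_zero_of_isNilpotent_isSemisimple ⟨n, ?_⟩ (hf.aeval q)
  rw [← map_pow]
  exact aeval_eq_zero_of_dvd_aeval_eq_zero hpq hp

theorem finrank_eigenspace_eq_of_trace_eq [CharZero K] {k l : ℕ}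
    (h : aeval f ((X - C a) * (X - C b)) = 0) (hab : a ≠ b) (hV : finrank K V = k + l)
    (htrace : LinearMap.trace K V f = k * a + l * b) : finrank K (f.eigenspace a) = k := by
  have hab' : a - b ≠ 0 := sub_ne_zero.2 hab
  -- `(f - b) / (a - b)` is the projection onto the `a`-eigenspace, so its trace is the dimension.
  have hproj : LinearMap.IsProj (f.eigenspace a) ((a - b)⁻¹ • (f - b • (1 : End K V))) := by
    constructor
    · intro v
      refine Submodule.smul_mem _ _ (End.mem_eigenspace_iff.2 (sub_eq_zero.1 ?_))
      simpa [Algebra.algebraMap_eq_smul_one] using LinearMap.congr_fun h v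
    · intro v hv
      simp [End.mem_eigenspace_iff.1 hv, ← sub_smul, smul_smul, hab']
  have hdim : (finrank K (f.eigenspace a) : K) = k := by
    rw [← hproj.trace, map_smul, map_sub, map_smul, LinearMap.trace_one, htrace, hV]
    simp only [smul_eq_mul, Nat.cast_add]
    field_simp
    ring
  exact_mod_cast hdim

theorem aeval_mul_eq_zero_of_algebraically_special [CharZero K] (hV : finrank K V = 3)
    (hf : f.IsSemisimple) {r s t : K} (hr : r = LinearMap.trace K V f) {S : End K V}
    (hS : S = f - (r / 3) • (1 : End K V)) (hs : s = LinearMap.trace K V (S ^ 2))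
    (ht : t = LinearMap.trace K V (S ^ 3)) (hspec : 6 * t ^ 2 = s ^ 3) (hsne : s ≠ 0) :
    aeval f ((X - C (r / 3 + 2 * t / s)) * (X - C (r / 3 - t / s))) = 0 := by
  obtain ⟨hsu, htu⟩ := eq_six_mul_div_pow hspec hsne
  have hS₁ : LinearMap.trace K V S = 0 := by
    rw [hS, map_sub, map_smul, LinearMap.trace_one, hV, ← hr, smul_eq_mul, Nat.cast_ofNat,
      div_mul_cancel₀ _ three_ne_zero, sub_self]
  have hcubic := aeval_mul_sq_eq_zero_of_trace_pow_eq hV hS₁ (hs.symm.trans hsu) (ht.symm.trans htu)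
  have hSaeval : S = aeval f (X - C (r / 3)) := by
    rw [hS, map_sub, aeval_X, aeval_C, Algebra.algebraMap_eq_smul_one]
  have hcomp : ((X - C (2 * (t / s))) * (X + C (t / s)) ^ 2).comp (X - C (r / 3)) =
      (X - C (r / 3 + 2 * t / s)) * (X - C (r / 3 - t / s)) ^ 2 := by
    simp only [mul_comp, sub_comp, add_comp, pow_comp, X_comp, C_comp, mul_div_assoc, map_add,
      map_sub]
    ring
  rw [hSaeval, ← aeval_comp, hcomp] at hcubic
  refine aeval_eq_zero_of_dvd_pow (n := 2) hf hcubic ?_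
  rw [mul_pow]
  exact mul_dvd_mul_right (dvd_pow_self _ two_ne_zero) _

end Endomorphisms

theorem ricci_algebraically_special_eigenstructure_general {K V : Type*} [Field K] [CharZero K]
    [AddCommGroup V] [Module K V] (hV : finrank K V = 3) (R : End K V) (hR : R.IsSemisimple)
    (r : K) (hr : r = LinearMap.trace K V R) (S : End K V)
    (hS : S = R - (r / 3) • (1 : End K V)) (s t : K) (hs : s = LinearMap.trace K V (S ^ 2))
    (ht : t = LinearMap.trace K V (S ^ 3)) (hspec : 6 * t ^ 2 = s ^ 3) (hsne : s ≠ 0)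
    (α β : K) (hα : α = r / 3 + 2 * t / s) (hβ : β = r / 3 - t / s) :
    α ≠ β ∧ R.HasEigenvalue α ∧ R.HasEigenvalue β ∧
      (∀ μ : K, R.HasEigenvalue μ → μ = α ∨ μ = β) ∧
      finrank K (R.eigenspace α) = 1 ∧ finrank K (R.eigenspace β) = 2 := by
  have : FiniteDimensional K V := .of_finrank_eq_succ hV
  have hquad := aeval_mul_eq_zero_of_algebraically_special hV hR hr hS hs ht hspec hsne
  rw [← hα, ← hβ] at hquad
  have htne : t ≠ 0 := fun ht₀ => hsne (by simpa [ht₀] using hspec.symm)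
  have hαβ : α ≠ β := by
    rw [← sub_ne_zero, show α - β = 3 * (t / s) by rw [hα, hβ]; ring]
    exact mul_ne_zero three_ne_zero (div_ne_zero htne hsne)
  have htrace : LinearMap.trace K V R = α + 2 * β := by rw [← hr, hα, hβ]; ring
  have hdimα : finrank K (R.eigenspace α) = 1 :=
    finrank_eigenspace_eq_of_trace_eq (l := 2) hquad hαβ hV (by simpa using htrace)
  have hdimβ : finrank K (R.eigenspace β) = 2 :=
    finrank_eigenspace_eq_of_trace_eq (l := 1) (by rwa [mul_comm]) hαβ.symm hV
      (by simpa [add_comm] using htrace)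
  have hroots (μ : K) (hμ : R.HasEigenvalue μ) : μ = α ∨ μ = β := by
    simpa [sub_eq_zero] using isRoot_of_hasEigenvalue_of_aeval_eq_zero hquad hμ
  exact ⟨hαβ, hasEigenvalue_of_finrank_eigenspace_ne_zero (by simp [hdimα]),
    hasEigenvalue_of_finrank_eigenspace_ne_zero (by simp [hdimβ]), hroots, hdimα, hdimβ⟩

theorem ricci_algebraically_special_eigenstructure (R : Matrix (Fin 3) (Fin 3) ℝ)
    (hsymm : R.IsSymm) (r : ℝ) (hr : r = R.trace)
    (S : Matrix (Fin 3) (Fin 3) ℝ) (hSdef : S = R - (r / 3) • (1 : Matrix (Fin 3) (Fin 3) ℝ))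
    (s t : ℝ) (hs : s = (S ^ 2).trace) (ht : t = (S ^ 3).trace)
    (hspec : 6 * t ^ 2 = s ^ 3) (hsne : s ≠ 0)
    (α β : ℝ) (hα : α = r / 3 + 2 * t / s) (hβ : β = r / 3 - t / s) :
    α ≠ β ∧
    Module.End.HasEigenvalue (Matrix.toLin' R) α ∧
    Module.End.HasEigenvalue (Matrix.toLin' R) β ∧
    (∀ μ : ℝ, Module.End.HasEigenvalue (Matrix.toLin' R) μ → μ = α ∨ μ = β) ∧
    Module.finrank ℝ (Module.End.eigenspace (Matrix.toLin' R) α) = 1 ∧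
    Module.finrank ℝ (Module.End.eigenspace (Matrix.toLin' R) β) = 2 := by
  have htrace (n : ℕ) : LinearMap.trace ℝ _ (S.toLin' ^ n) = (S ^ n).trace := by
    rw [← toLin'_pow, trace_toLin'_eq]
  have hherm : R.IsHermitian := (conjTranspose_eq_transpose_of_trivial R).trans hsymm
  exact ricci_algebraically_special_eigenstructure_general (by simp) R.toLin'
    (isSemisimple_toLin'_of_isHermitian hherm) r (by rw [hr, trace_toLin'_eq]) S.toLin'
    (by rw [hSdef, map_sub, map_smul, toLin'_one]; rfl) s t (by rw [hs, htrace])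
    (by rw [ht, htrace]) hspec hsne α β hα hβ
end

section
/- Let S be a real symmetric traceless 3×3 matrix with s = tr(S²) and t = tr(S³), assume 6t² = s³ and s ≠ 0, and let u be a unit eigenvector of S for the eigenvalue 2t/s. Then (1/t)·(2S³ − (4/3)·s·S) = I − u uᵀ. -/
open Matrix

/-!
In dimension `3` put `a = t / s`, so that `u` has eigenvalue `2a` and `6t² = s³` says `s = 6a²`.
Since `tr S = 0`, the mean eigenvalue of `S` on the orthogonal complement of `u` is `-a`, and the
value of `tr (S²)` leaves no room for any variance around this mean. So `S = 2a P - a (1 - P)` with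
`P = u uᵀ`, and the cubic `S³ - (2a)² S` annihilates `P`, leaving a multiple of `1 - P`.

In dimension `n` the eigenvalues are `(n - 1) a` and `-a`, whence `s = n (n - 1) a²` and
`t = n (n - 1) (n - 2) a³`; eliminating `a` gives the relation between `s` and `t`.
-/

section Idempotent

variable {R A : Type*} [CommRing R] [Ring A] [Algebra R A]

theorem smul_add_smul_one_sub_mul {p : A} (hp : IsIdempotentElem p) (a b c d : R) :
    (a • p + b • (1 - p)) * (c • p + d • (1 - p)) = (a * c) • p + (b * d) • (1 - p) := by
  simp only [add_mul, mul_add, smul_mul_smul_comm, hp.eq, hp.one_sub.eq, hp.mul_one_sub_self,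
    hp.one_sub_mul_self, smul_zero, add_zero, zero_add]

theorem smul_add_smul_one_sub_pow {p : A} (hp : IsIdempotentElem p) (a b : R) (k : ℕ) :
    (a • p + b • (1 - p)) ^ k = a ^ k • p + b ^ k • (1 - p) := by
  induction k with
  | zero => simp
  | succ k ih => rw [pow_succ, ih, smul_add_smul_one_sub_mul hp, ← pow_succ, ← pow_succ]

theorem smul_add_smul_one_sub_pow_three_sub {p : A} (hp : IsIdempotentElem p) (a b : R) :
    (a • p + b • (1 - p)) ^ 3 - a ^ 2 • (a • p + b • (1 - p)) =
      (b ^ 3 - a ^ 2 * b) • (1 - p) := by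
  rw [smul_add_smul_one_sub_pow hp]
  module

end Idempotent

section Hermitian

variable {ι R : Type*} [Fintype ι]

theorem isSelfAdjoint_trace [AddCommMonoid R] [StarAddMonoid R] {S : Matrix ι ι R}
    (hS : S.IsHermitian) : IsSelfAdjoint S.trace := by
  rw [isSelfAdjoint_iff, ← trace_conjTranspose, hS.eq]

theorem isStarProjection_vecMulVec_star [Semiring R] [StarRing R] {u : ι → R}
    (hu : star u ⬝ᵥ u = 1) : IsStarProjection (vecMulVec u (star u)) where
  isIdempotentElem := by simp [IsIdempotentElem, vecMulVec_mul_vecMulVec, hu]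
  isSelfAdjoint := by
    rw [isSelfAdjoint_iff, star_eq_conjTranspose, conjTranspose_vecMulVec, star_star]

variable [DecidableEq ι] [CommRing R] [PartialOrder R] [StarRing R] [StarOrderedRing R]
  [NoZeroDivisors R]

theorem eq_smul_add_smul_one_sub_of_trace_eq {S P : Matrix ι ι R} {a b : R} (hS : S.IsHermitian)
    (hP : IsStarProjection P) (ha : IsSelfAdjoint a) (hb : IsSelfAdjoint b) (hSP : S * P = a • P)
    (htr : S.trace = a * P.trace + b * (1 - P).trace)
    (htr_sq : (S ^ 2).trace = a ^ 2 * P.trace + b ^ 2 * (1 - P).trace) :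
    S = a • P + b • (1 - P) := by
  have hPS : P * S = a • P := by
    simpa [hS.star_eq, hP.isSelfAdjoint.star_eq, ha.star_eq] using congrArg star hSP
  set T := a • P + b • (1 - P) with hT
  have hT_herm : T.IsHermitian :=
    (hP.isSelfAdjoint.isHermitian.smul ha).add (hP.one_sub.isSelfAdjoint.isHermitian.smul hb)
  have hST : S * T = a ^ 2 • P + b • (S - a • P) := by
    rw [hT, mul_add, mul_smul_comm, mul_smul_comm, mul_sub, mul_one, hSP, smul_smul, sq]
  have hTS : T * S = a ^ 2 • P + b • (S - a • P) := by
    rw [hT, add_mul, smul_mul_assoc, smul_mul_assoc, sub_mul, one_mul, hPS, smul_smul, sq]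
  have hTT : T * T = a ^ 2 • P + b ^ 2 • (1 - P) := by
    rw [← sq, smul_add_smul_one_sub_pow hP.isIdempotentElem]
  rw [← sub_eq_zero, ← trace_conjTranspose_mul_self_eq_zero_iff, (hS.sub hT_herm).eq,
    sub_mul, mul_sub, mul_sub, hST, hTS, hTT, ← sq S]
  simp only [trace_sub, trace_add, trace_smul, smul_eq_mul] at htr htr_sq ⊢
  linear_combination htr_sq - 2 * b * htr

theorem eq_smul_vecMulVec_add_smul_of_trace_sq_eq {n a : R} (hn : n = Fintype.card ι)
    {S : Matrix ι ι R} (hherm : S.IsHermitian) (hS : S.trace = 0)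
    (hsq : (S ^ 2).trace = n * (n - 1) * a ^ 2) (ha : IsSelfAdjoint a)
    {u : ι → R} (hu : star u ⬝ᵥ u = 1) (heig : S *ᵥ u = ((n - 1) * a) • u) :
    S = ((n - 1) * a) • vecMulVec u (star u) + (-a) • (1 - vecMulVec u (star u)) := by
  have htr : (vecMulVec u (star u)).trace = 1 := by rw [trace_vecMulVec, dotProduct_comm, hu]
  have htr_compl : (1 - vecMulVec u (star u)).trace = n - 1 := by
    rw [trace_sub, trace_one, htr, hn]
  have hn_sa : IsSelfAdjoint (n - 1) := hn ▸ (IsSelfAdjoint.natCast _).sub (.one R)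
  apply eq_smul_add_smul_one_sub_of_trace_eq hherm (isStarProjection_vecMulVec_star hu)
    (hn_sa.mul ha) ha.neg
  · rw [mul_vecMulVec, heig, smul_vecMulVec]
  · rw [hS, htr, htr_compl]
    ring
  · rw [hsq, htr, htr_compl]
    ring

end Hermitian

/- The rational parametrization of the cuspidal cubic. -/
theorem exists_eq_mul_and_eq_mul_sq {K : Type*} [Field K] {c d s t : K} (hd : d ≠ 0) (hs : s ≠ 0)
    (h : c * t ^ 2 = d ^ 2 * s ^ 3) : ∃ a, t = d * a * s ∧ s = c * a ^ 2 := by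
  refine ⟨t / (d * s), by field_simp, ?_⟩
  field_simp
  linear_combination -h

theorem projector_formula_general {ι K : Type*} [Fintype ι] [DecidableEq ι]
    [Field K] [PartialOrder K] [StarRing K] [StarOrderedRing K]
    {n : K} (hn : n = Fintype.card ι) (hcard : 2 < Fintype.card ι)
    {S : Matrix ι ι K} (hherm : S.IsHermitian) (hS : S.trace = 0)
    {s t : K} (hs : s = (S ^ 2).trace) (ht : t = (S ^ 3).trace)
    (hspec : n * (n - 1) * t ^ 2 = (n - 2) ^ 2 * s ^ 3) (hsne : s ≠ 0)
    {u : ι → K} (hu : star u ⬝ᵥ u = 1) (heig : S *ᵥ u = ((n - 1) * t / ((n - 2) * s)) • u) :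
    (1 / t) • ((n - 1) • S ^ 3 - ((n - 1) ^ 2 / n * s) • S) = 1 - vecMulVec u (star u) := by
  obtain ⟨hn0, hn1, hn2⟩ : n ≠ 0 ∧ n - 1 ≠ 0 ∧ n - 2 ≠ 0 := by
    simp only [hn, sub_ne_zero]
    exact ⟨by norm_cast; lia, by norm_cast; lia, by norm_cast; lia⟩
  obtain ⟨a, rfl, hsa⟩ := exists_eq_mul_and_eq_mul_sq hn2 hsne hspec
  have ha0 : a ≠ 0 := by
    rintro rfl
    simp [hsa] at hsne
  have ha : IsSelfAdjoint a := by
    have ha_eq : a = (S ^ 3).trace / ((n - 2) * (S ^ 2).trace) := by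
      rw [← ht, ← hs]
      field_simp
    have hn_sa : IsSelfAdjoint (n - 2) := hn ▸ (IsSelfAdjoint.natCast _).sub (.ofNat 2)
    rw [ha_eq]
    exact (isSelfAdjoint_trace (hherm.pow 3)).div
      (hn_sa.mul (isSelfAdjoint_trace (hherm.pow 2)))
  have hval : (n - 1) * ((n - 2) * a * s) / ((n - 2) * s) = (n - 1) * a := by field_simp
  have hdecomp := eq_smul_vecMulVec_add_smul_of_trace_sq_eq hn hherm hS (hs.symm.trans hsa) ha hu
    (hval ▸ heig)
  have hcubic : S ^ 3 - ((n - 1) * a) ^ 2 • S =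
      (n * (n - 2) * a ^ 3) • (1 - vecMulVec u (star u)) := by
    rw [hdecomp, smul_add_smul_one_sub_pow_three_sub
      (isStarProjection_vecMulVec_star hu).isIdempotentElem]
    congr 1
    ring
  calc (1 / ((n - 2) * a * s)) • ((n - 1) • S ^ 3 - ((n - 1) ^ 2 / n * s) • S)
    _ = (1 / (n * (n - 2) * a ^ 3)) • (S ^ 3 - ((n - 1) * a) ^ 2 • S) := by
      rw [hsa]
      match_scalars <;> field_simp
    _ = 1 - vecMulVec u (star u) := by
      rw [hcubic, one_div, inv_smul_smul₀ (mul_ne_zero (mul_ne_zero hn0 hn2) (pow_ne_zero 3 ha0))]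

theorem projector_formula (S : Matrix (Fin 3) (Fin 3) ℝ)
    (hsymm : S.IsSymm) (hS : S.trace = 0)
    (s t : ℝ) (hs : s = (S ^ 2).trace) (ht : t = (S ^ 3).trace)
    (hspec : 6 * t ^ 2 = s ^ 3) (hsne : s ≠ 0)
    (u : Fin 3 → ℝ) (hu : u ⬝ᵥ u = 1) (heig : S.mulVec u = (2 * t / s) • u) :
    (1 / t) • ((2 : ℝ) • S ^ 3 - (4 / 3 * s) • S) =
      (1 : Matrix (Fin 3) (Fin 3) ℝ) - vecMulVec u u := by
  have h := projector_formula_general (n := 3) (by simp) (by simp)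
    (isHermitian_iff_isSymm.2 hsymm) hS hs ht (by linear_combination hspec) hsne
    (u := u) (by simpa using hu) (by rw [heig]; norm_num)
  norm_num at h ⊢
  exact h
end
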